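/- Let G(·,·,·,·) be the Grundy function of three-pile maximum Nim with rule sequence f(x) = ⌈x/2⌉ and a one-time pass. Suppose s,t,u ∈ ℕ satisfy at least one of: s > 0 and t > 0; t > 0 and u > 0; or u > 0 and s > 0. Then for every m ∈ ℕ, if G(s,t,u,0) = 2m + 1 then G(s,t,u,1) = 2m. -/

import Mathlib

/-!
Write `A` and `B` for the Grundy functions without and with the pass. As soon as two piles are
nonempty, `B = partner ∘ A`, where `partner` swaps `2m` and `2m + 1`; the theorem is the odd half.

The engine is `mex_partner`: if `g` is the mex of a finite set `S`, then the mex of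
the partners of `S` together with `g` is `partner g`. When every move from a position again leaves two nonempty
piles, induction says that the values reachable with the pass are exactly these,
where `S` holds the values reachable without it and `g = mex S` comes from using the pass.

A move leaves fewer than two nonempty piles only from a position with piles `1, y, 0` in some
order. There `A (1, y, 0) = partner (A (0, y, 0))`, again by `mex_partner`, so the claim becomes
`B (1, y, 0) = A (0, y, 0)`. For `y ≥ 2`, by induction, the moves in `y` give the values
reachable from `(0, y, 0)` without the pass, and the other two options avoid `A (0, y, 0)`: the pass gives
`partner (A (0, y, 0))`, and removing the pile `1` gives `B (0, y, 0)`, from which one can pass to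
`A (0, y, 0)`; `y = 1` is a direct computation. The orders of the three piles are handled by permuting the arguments of `A` and `B`.
-/

/-- The minimum excluded value of a set of naturals. -/
noncomputable def mex (S : Set ℕ) : ℕ := sInf {n : ℕ | n ∉ S}

/-- The involution of `ℕ` swapping `2m` and `2m + 1`. -/
def partner (n : ℕ) : ℕ := if n % 2 = 0 then n + 1 else n - 1

lemma partner_partner (n : ℕ) : partner (partner n) = n := by
  unfold partner; split_ifs <;> omega

lemma partner_ne (n : ℕ) : partner n ≠ n := by
  unfold partner; split_ifs <;> omega

lemma mex_eq {S : Set ℕ} {n : ℕ} (h₁ : n ∉ S) (h₂ : ∀ k < n, k ∈ S) : mex S = n := by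
  apply le_antisymm
  · exact Nat.sInf_le h₁
  · exact le_csInf ⟨n, h₁⟩ fun k hk => not_lt.1 fun hlt => hk (h₂ k hlt)

lemma mex_notMem {S : Set ℕ} (hS : S.Finite) : mex S ∉ S :=
  Nat.sInf_mem (s := {n : ℕ | n ∉ S}) hS.exists_notMem

lemma mem_of_lt_mex {S : Set ℕ} {k : ℕ} (h : k < mex S) : k ∈ S := by
  by_contra hk
  exact absurd (Nat.sInf_le (s := {n : ℕ | n ∉ S}) hk) (not_le.2 h)

/-- If the options with values in `S` are all replaced by their partners and an option of value
`mex S` is added, then the mex is replaced by its partner. -/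
lemma mex_partner {S T : Set ℕ} (hS : S.Finite)
    (hT : ∀ n, n ∈ T ↔ n = mex S ∨ ∃ k ∈ S, n = partner k) : mex T = partner (mex S) := by
  apply mex_eq
  · rw [hT]
    rintro (h | ⟨k, hk, h⟩)
    · exact partner_ne _ h
    · have := congrArg partner h
      rw [partner_partner, partner_partner] at this
      exact mex_notMem hS (this ▸ hk)
  · intro k hk
    rw [hT]
    by_cases hk' : k = mex S
    · exact Or.inl hk'
    · refine Or.inr ⟨partner k, mem_of_lt_mex ?_, (partner_partner k).symm⟩
      unfold partner at *
      split_ifs at * <;> omega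

/-- The values under `F` of the positions reachable from piles `s, t, u` by removing stones. -/
def options (F : ℕ → ℕ → ℕ → ℕ) (s t u : ℕ) : Set ℕ :=
  {g : ℕ |
    (∃ v : ℕ, 1 ≤ v ∧ v ≤ (s + 1) / 2 ∧ g = F (s - v) t u) ∨
    (∃ v : ℕ, 1 ≤ v ∧ v ≤ (t + 1) / 2 ∧ g = F s (t - v) u) ∨
    (∃ v : ℕ, 1 ≤ v ∧ v ≤ (u + 1) / 2 ∧ g = F s t (u - v))}

lemma options_finite (F : ℕ → ℕ → ℕ → ℕ) (s t u : ℕ) : (options F s t u).Finite := by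
  have fin : ∀ (f : ℕ → ℕ) (n : ℕ), {g | ∃ v : ℕ, 1 ≤ v ∧ v ≤ n ∧ g = f v}.Finite := by
    intro f n
    apply ((Set.finite_Icc 1 n).image f).subset
    rintro g ⟨v, h₁, h₂, rfl⟩
    exact ⟨v, ⟨h₁, h₂⟩, rfl⟩
  exact (fin _ _).union ((fin _ _).union (fin _ _))

/-- `A` and `B` satisfy the Grundy recursions without and with an available pass. The value of `B`
at the empty position is left free, since it plays no role once two piles are nonempty. -/
structure IsGrundyPair (A B : ℕ → ℕ → ℕ → ℕ) : Prop where
  noPass : ∀ s t u, A s t u = mex (options A s t u)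
  pass : ∀ s t u, 1 ≤ s + t + u → B s t u = mex (options B s t u ∪ {A s t u})

namespace IsGrundyPair

variable {A B : ℕ → ℕ → ℕ → ℕ}

lemma swap₁₂ (h : IsGrundyPair A B) :
    IsGrundyPair (fun s t u => A t s u) (fun s t u => B t s u) := by
  have key : ∀ (F : ℕ → ℕ → ℕ → ℕ) (s t u : ℕ),
      options (fun s t u => F t s u) s t u = options F t s u := by
    intro F s t u
    ext g
    exact or_left_comm
  refine ⟨fun s t u => ?_, fun s t u hpos => ?_⟩
  · rw [key]; exact h.noPass t s u
  · rw [key]; exact h.pass t s u (by omega)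

lemma swap₂₃ (h : IsGrundyPair A B) :
    IsGrundyPair (fun s t u => A s u t) (fun s t u => B s u t) := by
  have key : ∀ (F : ℕ → ℕ → ℕ → ℕ) (s t u : ℕ),
      options (fun s t u => F s u t) s t u = options F s u t := by
    intro F s t u
    ext g
    exact or_congr_right or_comm
  refine ⟨fun s t u => ?_, fun s t u hpos => ?_⟩
  · rw [key]; exact h.noPass s u t
  · rw [key]; exact h.pass s u t (by omega)

lemma noPass_ne (h : IsGrundyPair A B) {s t u g : ℕ} (hg : g ∈ options A s t u) :
    g ≠ A s t u := by
  rintro rfl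
  have := mex_notMem (options_finite A s t u)
  rw [← h.noPass] at this
  exact this hg

/-- Passing is itself a move, so it changes the value. -/
lemma pass_ne (h : IsGrundyPair A B) {s t u : ℕ} (hpos : 1 ≤ s + t + u) :
    B s t u ≠ A s t u := by
  intro he
  have := mex_notMem ((options_finite B s t u).union (Set.finite_singleton (A s t u)))
  rw [← h.pass s t u hpos, he] at this
  exact this (Or.inr rfl)

lemma noPass_one (h : IsGrundyPair A B) (y : ℕ) : A 1 y 0 = partner (A 0 y 0) := by
  induction y using Nat.strong_induction_on with
  | _ y ih =>
    rw [h.noPass 1 y 0, h.noPass 0 y 0]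
    apply mex_partner (options_finite _ _ _ _)
    intro n
    rw [← h.noPass 0 y 0]
    constructor
    · rintro (⟨v, h₁, h₂, rfl⟩ | ⟨v, h₁, h₂, rfl⟩ | ⟨v, h₁, h₂, rfl⟩)
      · obtain rfl : v = 1 := by omega
        exact Or.inl rfl
      · exact Or.inr ⟨_, Or.inr (Or.inl ⟨v, h₁, h₂, rfl⟩), ih _ (by omega)⟩
      · omega
    · rintro (rfl | ⟨k, ⟨v, h₁, h₂, rfl⟩ | ⟨v, h₁, h₂, rfl⟩ | ⟨v, h₁, h₂, rfl⟩, rfl⟩)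
      · exact Or.inl ⟨1, le_rfl, by omega, rfl⟩
      · omega
      · exact Or.inr (Or.inl ⟨v, h₁, h₂, (ih _ (by omega)).symm⟩)
      · omega

lemma noPass_zero (h : IsGrundyPair A B) : A 0 0 0 = 0 := by
  rw [h.noPass]
  apply mex_eq
  · rintro (⟨v, h₁, h₂, -⟩ | ⟨v, h₁, h₂, -⟩ | ⟨v, h₁, h₂, -⟩) <;> omega
  · intro k hk; omega

lemma pass_one (h : IsGrundyPair A B) (y : ℕ) (hy : 0 < y) : B 1 y 0 = A 0 y 0 := by
  induction y using Nat.strong_induction_on with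
  | _ y ih =>
    have hpass : A 1 y 0 ≠ A 0 y 0 := by
      rw [h.noPass_one]; exact partner_ne _
    have hremove : B 0 y 0 ≠ A 0 y 0 := h.pass_ne (by omega)
    rw [h.pass 1 y 0 (by omega)]
    -- From `y = 1` the second pile can be emptied too, which the induction does not cover.
    obtain rfl | hy2 : y = 1 ∨ 2 ≤ y := by omega
    · have h10 : A 1 0 0 = 1 := by
        rw [h.noPass_one, h.noPass_zero]; rfl
      have h01 : A 0 1 0 = 1 := by
        have := h.swap₁₂.noPass_one 0
        simp only [h.noPass_zero] at this
        rw [this]; rfl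
      have h11 : A 1 1 0 = 0 := by
        rw [h.noPass_one, h01]; rfl
      apply mex_eq
      · rintro ((⟨v, h₁, h₂, e⟩ | ⟨v, h₁, h₂, e⟩ | ⟨v, h₁, h₂, e⟩) | e)
        · obtain rfl : v = 1 := by omega
          exact hremove e.symm
        · obtain rfl : v = 1 := by omega
          exact h.pass_ne (s := 1) (t := 0) (u := 0) (by omega) (e.symm.trans (h01.trans h10.symm))
        · omega
        · exact hpass e.symm
      · intro k hk
        refine Or.inr ?_
        rw [h11, Set.mem_singleton_iff]
        omega
    · apply mex_eq
      · rintro ((⟨v, h₁, h₂, e⟩ | ⟨v, h₁, h₂, e⟩ | ⟨v, h₁, h₂, e⟩) | e)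
        · obtain rfl : v = 1 := by omega
          exact hremove e.symm
        · rw [ih _ (by omega) (by omega)] at e
          exact h.noPass_ne (Or.inr (Or.inl ⟨v, h₁, h₂, rfl⟩)) e.symm
        · omega
        · exact hpass e.symm
      · intro k hk
        rw [h.noPass] at hk
        rcases mem_of_lt_mex hk with ⟨v, h₁, h₂, e⟩ | ⟨v, h₁, h₂, e⟩ | ⟨v, h₁, h₂, e⟩
        · omega
        · refine Or.inl (Or.inr (Or.inl ⟨v, h₁, h₂, ?_⟩))
          rw [ih _ (by omega) (by omega), e]
        · omega

/-- The positions from which a move can leave a single nonempty pile, up to order. -/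
lemma pass_one_zero (h : IsGrundyPair A B) (y : ℕ) (hy : 0 < y) :
    B 1 y 0 = partner (A 1 y 0) := by
  rw [h.pass_one y hy, h.noPass_one, partner_partner]

theorem pass_eq_partner (h : IsGrundyPair A B) (s t u : ℕ)
    (h2 : (0 < s ∧ 0 < t) ∨ (0 < t ∧ 0 < u) ∨ (0 < u ∧ 0 < s)) :
    B s t u = partner (A s t u) := by
  induction hn : s + t + u using Nat.strong_induction_on generalizing s t u with
  | _ n ih =>
    by_cases hs : (s = 1 ∧ u = 0) ∨ (s = 1 ∧ t = 0) ∨ (t = 1 ∧ u = 0) ∨ (t = 1 ∧ s = 0) ∨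
        (u = 1 ∧ s = 0) ∨ (u = 1 ∧ t = 0)
    · rcases hs with ⟨rfl, rfl⟩ | ⟨rfl, rfl⟩ | ⟨rfl, rfl⟩ | ⟨rfl, rfl⟩ | ⟨rfl, rfl⟩ | ⟨rfl, rfl⟩
      · exact h.pass_one_zero t (by omega)
      · exact h.swap₂₃.pass_one_zero u (by omega)
      · exact h.swap₁₂.pass_one_zero s (by omega)
      · exact h.swap₁₂.swap₂₃.pass_one_zero u (by omega)
      · exact h.swap₂₃.swap₁₂.swap₂₃.pass_one_zero t (by omega)
      · exact h.swap₂₃.swap₁₂.pass_one_zero s (by omega)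
    · rw [h.pass s t u (by omega), h.noPass s t u]
      apply mex_partner (options_finite _ _ _ _)
      intro n
      rw [← h.noPass]
      constructor
      · rintro ((⟨v, h₁, h₂, rfl⟩ | ⟨v, h₁, h₂, rfl⟩ | ⟨v, h₁, h₂, rfl⟩) | e)
        · exact Or.inr ⟨_, Or.inl ⟨v, h₁, h₂, rfl⟩, ih _ (by omega) _ _ _ (by omega) rfl⟩
        · exact Or.inr ⟨_, Or.inr (Or.inl ⟨v, h₁, h₂, rfl⟩),
            ih _ (by omega) _ _ _ (by omega) rfl⟩
        · exact Or.inr ⟨_, Or.inr (Or.inr ⟨v, h₁, h₂, rfl⟩),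
            ih _ (by omega) _ _ _ (by omega) rfl⟩
        · exact Or.inl e
      · rintro (rfl | ⟨k, ⟨v, h₁, h₂, rfl⟩ | ⟨v, h₁, h₂, rfl⟩ | ⟨v, h₁, h₂, rfl⟩, rfl⟩)
        · exact Or.inr rfl
        · exact Or.inl (Or.inl ⟨v, h₁, h₂, (ih _ (by omega) _ _ _ (by omega) rfl).symm⟩)
        · exact Or.inl (Or.inr (Or.inl
            ⟨v, h₁, h₂, (ih _ (by omega) _ _ _ (by omega) rfl).symm⟩))
        · exact Or.inl (Or.inr (Or.inr
            ⟨v, h₁, h₂, (ih _ (by omega) _ _ _ (by omega) rfl).symm⟩))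

end IsGrundyPair

/-- Theorem 5(ii.2): if at least two piles are nonempty and `G(s,t,u,0) = 2m + 1`, then `G(s,t,u,1) = 2m`. -/
theorem threePileHalfNimPass_odd
    (G : ℕ → ℕ → ℕ → ℕ → ℕ)
    (hG0 : ∀ s t u : ℕ, G s t u 0 = mex {g : ℕ |
        (∃ v : ℕ, 1 ≤ v ∧ v ≤ (s + 1) / 2 ∧ g = G (s - v) t u 0) ∨
        (∃ v : ℕ, 1 ≤ v ∧ v ≤ (t + 1) / 2 ∧ g = G s (t - v) u 0) ∨
        (∃ v : ℕ, 1 ≤ v ∧ v ≤ (u + 1) / 2 ∧ g = G s t (u - v) 0)})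
    (hG10 : G 0 0 0 1 = 0)
    (hG1 : ∀ s t u : ℕ, 1 ≤ s + t + u → G s t u 1 = mex ({g : ℕ |
        (∃ v : ℕ, 1 ≤ v ∧ v ≤ (s + 1) / 2 ∧ g = G (s - v) t u 1) ∨
        (∃ v : ℕ, 1 ≤ v ∧ v ≤ (t + 1) / 2 ∧ g = G s (t - v) u 1) ∨
        (∃ v : ℕ, 1 ≤ v ∧ v ≤ (u + 1) / 2 ∧ g = G s t (u - v) 1)} ∪ {G s t u 0}))
    (s t u : ℕ) (h2 : (0 < s ∧ 0 < t) ∨ (0 < t ∧ 0 < u) ∨ (0 < u ∧ 0 < s))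
    (m : ℕ) (h : G s t u 0 = 2 * m + 1) :
    G s t u 1 = 2 * m := by
  have hpair : IsGrundyPair (fun s t u => G s t u 0) (fun s t u => G s t u 1) := ⟨hG0, hG1⟩
  have key := hpair.pass_eq_partner s t u h2
  simp only [h] at key
  rw [key]
  unfold partner
  split_ifs <;> omega
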